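/- arXiv:2002.10242 — 2 statements merged into one kernel-verified Lean document; each statement's English description precedes it below -/
import Mathlib

section
/- Let c ≥ 1 and v ≥ 0 be natural numbers and let f : Fin v → Fin c be a uniformly random function (each of the c^v functions equally likely). Let S(f) = #{b ∈ Fin c : the fiber f⁻¹({b}) has exactly one element}. Then for every i with 0 ≤ i ≤ min(c, v), P(S(f) = i) = C(c,i) · C(v,i) · i! · (1/c)^i · ((c−i)/c)^{v−i} · P₀, where P₀ is the probability that a uniformly random function g : Fin (v−i) → Fin (c−i) has no fiber of exactly one element; and P(S(f) = i) = 0 whenever i > v. -/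
/-- The number of sub-channels occupied by exactly one packet under the assignment `f`. -/
def singletonFiberCount {v c : ℕ} (f : Fin v → Fin c) : ℕ :=
  (Finset.univ.filter
    (fun b : Fin c => (Finset.univ.filter (fun a : Fin v => f a = b)).card = 1)).card

/-- The probability, for a uniformly random function `f : Fin v → Fin c` (each of the
`c ^ v` functions equally likely), that exactly `i` sub-channels are occupied by exactly
one packet. -/
noncomputable def probSingleton (v c i : ℕ) : ℝ :=
  ((Finset.univ.filter
      (fun f : Fin v → Fin c => singletonFiberCount f = i)).card : ℝ) / (c : ℝ) ^ v

/-!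
A map from `v` points to `c` values with exactly `i` singleton fibers is determined by the set `T`
of the `i` values taken once, the set `S` of the `i` points where they are taken, the induced
bijection `S ≃ T`, and the remaining map from the complement of `S` to the complement of `T`, which
can be any map without singleton fibers. Hence there are `C(c,i) · C(v,i) · i! · N₀` such maps,
where `N₀` counts the maps from `v - i` points to `c - i` values without singleton fibers. Dividing
by `c ^ v = c ^ i · c ^ (v - i)` gives the probability, since `N₀ = (c - i) ^ (v - i) · P₀`.
-/

open Finset Function

section Splitting

variable {α β : Type*} {p : α → Prop} {q : β → Prop}

/-- A map `f : α → β` such that the preimage of `q` is `p` is the same thing as its two parts, one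
on the points satisfying `p` and one on the other points. -/
def arrowSplitEquiv (p : α → Prop) (q : β → Prop) [DecidablePred p] :
    {f : α → β // ∀ a, q (f a) ↔ p a} ≃
      ({a // p a} → {b // q b}) × ({a // ¬p a} → {b // ¬q b}) where
  toFun f := (Subtype.map f.1 fun a => (f.2 a).2, Subtype.map f.1 fun a => mt (f.2 a).1)
  invFun gh :=
    ⟨fun a => if ha : p a then gh.1 ⟨a, ha⟩ else gh.2 ⟨a, ha⟩, fun a => by
      by_cases ha : p a
      · simpa only [ha, dif_pos, iff_true] using (gh.1 ⟨a, ha⟩).2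
      · simpa only [ha, dif_neg, not_false_eq_true, iff_false] using (gh.2 ⟨a, ha⟩).2⟩
  left_inv f := by ext a; simp [Subtype.map]
  right_inv gh := by ext a <;> simp [Subtype.map, a.2]

theorem existsUnique_subtypeMap_eq_iff {f : α → β} (hf : ∀ a, q (f a) ↔ p a) (b : {b // q b}) :
    (∃! a, Subtype.map f (fun a => (hf a).2) a = b) ↔ ∃! a, f a = b := by
  have mem_of_eq {a : α} (ha : f a = b) : p a := (hf a).1 (ha ▸ b.2)
  constructor
  · rintro ⟨a, ha, ha_unique⟩
    exact ⟨a, congrArg Subtype.val ha, fun a' ha' =>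
      congrArg Subtype.val (ha_unique ⟨a', mem_of_eq ha'⟩ (Subtype.ext ha'))⟩
  · rintro ⟨a, ha, ha_unique⟩
    exact ⟨⟨a, mem_of_eq ha⟩, Subtype.ext ha, fun a' ha' =>
      Subtype.ext (ha_unique a' (congrArg Subtype.val ha'))⟩

end Splitting

section SingletonFibers

variable {α β α' β' : Type*} [Fintype α] [Fintype β] [DecidableEq β]
  [Fintype α'] [Fintype β'] [DecidableEq β']

/-- The set of values that `f` takes exactly once: for packets choosing sub-channels, the
sub-channels occupied by exactly one packet. On `Fin v → Fin c` its cardinality is, by unfolding,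
`singletonFiberCount f`. -/
def singletonFibers (f : α → β) : Finset β :=
  {b | #{a | f a = b} = 1}

theorem mem_singletonFibers {f : α → β} {b : β} : b ∈ singletonFibers f ↔ ∃! a, f a = b := by
  rw [singletonFibers, mem_filter_univ, Fintype.existsUnique_iff_card_one]

theorem singletonFibers_eq_empty_iff {f : α → β} :
    singletonFibers f = ∅ ↔ ∀ b, ¬∃! a, f a = b := by
  simp only [eq_empty_iff_forall_notMem, mem_singletonFibers]

theorem singletonFibers_arrowCongr_eq_empty_iff (e : α ≃ α') (e' : β ≃ β') (f : α → β) :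
    singletonFibers (e.arrowCongr e' f) = ∅ ↔ singletonFibers f = ∅ := by
  simp only [singletonFibers_eq_empty_iff, Equiv.arrowCongr_apply, comp_apply,
    ← e'.eq_symm_apply]
  rw [e'.symm.forall_congr_left]
  simp only [Equiv.symm_symm, Equiv.symm_apply_apply]
  exact forall_congr' fun b => not_congr (e.symm.existsUnique_congr_right (q := (f · = b)))

theorem card_filter_singletonFibers_eq_empty_congr [DecidableEq α] [DecidableEq α']
    (e : α ≃ α') (e' : β ≃ β') :
    #{f : α → β | singletonFibers f = ∅} = #{f : α' → β' | singletonFibers f = ∅} :=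
  card_equiv (e.arrowCongr e') fun f => by
    simp only [mem_filter_univ, singletonFibers_arrowCongr_eq_empty_iff]

variable {S : Finset α} {T : Finset β} {f : α → β}

theorem bijective_subtypeMap_iff_subset_singletonFibers (hf : ∀ a, f a ∈ T ↔ a ∈ S) :
    Bijective (Subtype.map f fun a => (hf a).2) ↔ T ⊆ singletonFibers f := by
  simp only [bijective_iff_existsUnique, existsUnique_subtypeMap_eq_iff hf, Subtype.forall,
    subset_iff, mem_singletonFibers]

theorem card_filter_mem_singletonFibers (f : α → β) :
    #{a | f a ∈ singletonFibers f} = #(singletonFibers f) := by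
  have hf (a : α) :
      f a ∈ singletonFibers f ↔ a ∈ ({a | f a ∈ singletonFibers f} : Finset α) := by
    rw [mem_filter_univ]
  simpa only [Fintype.card_coe] using Fintype.card_of_bijective
    ((bijective_subtypeMap_iff_subset_singletonFibers hf).2 Subset.rfl)

variable [DecidableEq α]

theorem singletonFibers_subtypeMap_eq_empty_iff_subset (hf : ∀ a, f a ∈ T ↔ a ∈ S) :
    singletonFibers (Subtype.map (p := (· ∉ S)) (q := (· ∉ T)) f fun a => mt (hf a).1) = ∅ ↔
      singletonFibers f ⊆ T := by
  have hf_not (a : α) : f a ∉ T ↔ a ∉ S := not_congr (hf a)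
  simp only [singletonFibers_eq_empty_iff, Subtype.forall, subset_iff, mem_singletonFibers,
    existsUnique_subtypeMap_eq_iff (p := (· ∉ S)) (q := (· ∉ T)) hf_not]
  exact forall_congr' fun b => not_imp_not

theorem singletonFibers_eq_iff (hf : ∀ a, f a ∈ T ↔ a ∈ S) :
    singletonFibers f = T ↔
      Bijective (Subtype.map f fun a => (hf a).2) ∧
        singletonFibers (Subtype.map (p := (· ∉ S)) (q := (· ∉ T)) f fun a => mt (hf a).1) = ∅ := by
  rw [bijective_subtypeMap_iff_subset_singletonFibers hf,
    singletonFibers_subtypeMap_eq_empty_iff_subset hf, and_comm, Subset.antisymm_iff]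

/-- A map whose set of values taken once is `T`, at the points of `S`, is a bijection `S ≃ T`
together with a map between the complements that takes no value exactly once. -/
noncomputable def singletonFibersSplitEquiv (S : Finset α) (T : Finset β) :
    {f : α → β // (∀ a, f a ∈ T ↔ a ∈ S) ∧ singletonFibers f = T} ≃
      (S ≃ T) × {h : {a // a ∉ S} → {b // b ∉ T} // singletonFibers h = ∅} :=
  calc
    _ ≃ {f : {f : α → β // ∀ a, f a ∈ T ↔ a ∈ S} // singletonFibers f.1 = T} :=
      (Equiv.subtypeSubtypeEquivSubtypeInter _ _).symm
    _ ≃ {gh : (S → T) × ({a // a ∉ S} → {b // b ∉ T}) //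
          Bijective gh.1 ∧ singletonFibers gh.2 = ∅} :=
      (arrowSplitEquiv (· ∈ S) (· ∈ T)).subtypeEquiv fun f => singletonFibers_eq_iff f.2
    _ ≃ {g : S → T // Bijective g} × {h : {a // a ∉ S} → {b // b ∉ T} // singletonFibers h = ∅} :=
      Equiv.subtypeProdEquivProd (p := Bijective) (q := (singletonFibers · = ∅))
    _ ≃ _ := Equiv.prodCongr Equiv.bijectiveEquiv (Equiv.refl _)

variable {γ δ : Type*} [Fintype γ] [Fintype δ] [DecidableEq γ] [DecidableEq δ]

theorem card_filter_singletonFibers_eq {i : ℕ} (hS : #S = i) (hT : #T = i)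
    (hγ : Fintype.card γ = Fintype.card α - i) (hδ : Fintype.card δ = Fintype.card β - i) :
    #{f : α → β | (∀ a, f a ∈ T ↔ a ∈ S) ∧ singletonFibers f = T} =
      i.factorial * #{g : γ → δ | #(singletonFibers g) = 0} := by
  have card_bijections : Fintype.card (S ≃ T) = i.factorial := by
    rw [Fintype.card_equiv (equivOfCardEq (hS.trans hT.symm)), Fintype.card_coe, hS]
  have card_points : Fintype.card {a // a ∉ S} = Fintype.card γ := by
    rw [Fintype.card_subtype_compl, Fintype.card_coe, hS, hγ]
  have card_values : Fintype.card {b // b ∉ T} = Fintype.card δ := by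
    rw [Fintype.card_subtype_compl, Fintype.card_coe, hT, hδ]
  rw [filter_congr (s := (univ : Finset (γ → δ))) fun g _ => card_eq_zero,
    ← Fintype.card_subtype, Fintype.card_congr (singletonFibersSplitEquiv S T),
    Fintype.card_prod, card_bijections, Fintype.card_subtype,
    card_filter_singletonFibers_eq_empty_congr (Fintype.equivOfCardEq card_points)
      (Fintype.equivOfCardEq card_values)]

theorem card_filter_card_singletonFibers_eq {i : ℕ}
    (hγ : Fintype.card γ = Fintype.card α - i) (hδ : Fintype.card δ = Fintype.card β - i) :
    #{f : α → β | #(singletonFibers f) = i} =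
      (Fintype.card β).choose i * (Fintype.card α).choose i * i.factorial *
        #{g : γ → δ | #(singletonFibers g) = 0} := by
  let pointsAndValues (f : α → β) : Finset α × Finset β :=
    (({a | f a ∈ singletonFibers f} : Finset α), singletonFibers f)
  have maps_to : ∀ f ∈ ({f : α → β | #(singletonFibers f) = i} : Finset (α → β)),
      pointsAndValues f ∈ powersetCard i univ ×ˢ powersetCard i univ := by
    intro f hf
    simpa [pointsAndValues, card_filter_mem_singletonFibers] using hf
  have card_fiber : ∀ ST ∈ powersetCard i (univ : Finset α) ×ˢ powersetCard i (univ : Finset β),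
      #{f ∈ {f : α → β | #(singletonFibers f) = i} | pointsAndValues f = ST} =
        i.factorial * #{g : γ → δ | #(singletonFibers g) = 0} := by
    rintro ⟨S, T⟩ hST
    obtain ⟨hS, hT⟩ : #S = i ∧ #T = i := by simpa using hST
    rw [← card_filter_singletonFibers_eq hS hT hγ hδ, filter_filter]
    congr 1 with f
    simp only [mem_filter_univ, pointsAndValues, Prod.mk.injEq]
    constructor
    · rintro ⟨-, rfl, rfl⟩
      simp
    · rintro ⟨hf, rfl⟩
      exact ⟨hT, by ext a; simp [hf], rfl⟩
  rw [card_eq_sum_card_fiberwise maps_to, sum_const_nat card_fiber, card_product,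
    card_powersetCard, card_powersetCard, card_univ, card_univ]
  ring

end SingletonFibers

theorem card_filter_singletonFiberCount_eq (v c i : ℕ) :
    #{f : Fin v → Fin c | singletonFiberCount f = i} =
      c.choose i * v.choose i * i.factorial *
        #{g : Fin (v - i) → Fin (c - i) | singletonFiberCount g = 0} := by
  have count := card_filter_card_singletonFibers_eq (α := Fin v) (β := Fin c) (γ := Fin (v - i))
    (δ := Fin (c - i)) (i := i) (by simp) (by simp)
  rwa [Fintype.card_fin, Fintype.card_fin] at count

-- For `c = 0 < v`, where `probSingleton` divides by zero, there are no maps to count. In the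
-- recursion this is what happens to the remaining map when `i` is the number of values.
theorem pow_mul_probSingleton (v c i : ℕ) :
    (c : ℝ) ^ v * probSingleton v c i = #{f : Fin v → Fin c | singletonFiberCount f = i} := by
  refine mul_div_cancel_of_imp' fun pow_eq_zero => ?_
  have card_maps : Fintype.card (Fin v → Fin c) = 0 := by
    simpa only [Fintype.card_fun, Fintype.card_fin] using mod_cast pow_eq_zero
  exact mod_cast Nat.eq_zero_of_le_zero (card_maps ▸ card_le_univ _)

/-- Recursive formula for `p_{i,1,c,v}`: the probability that exactly `i` sub-channels
contain exactly one packet when `v` vehicles select uniformly at random among `c ≥ 1`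
sub-channels, and `p_{i,1,c,v} = 0` whenever `i > v`. -/
theorem caps_prob_singleton_fibers (c v : ℕ) (hc : 1 ≤ c) :
    (∀ i, i ≤ min c v →
      probSingleton v c i
        = (c.choose i : ℝ) * (v.choose i : ℝ) * (i.factorial : ℝ)
            * (1 / (c : ℝ)) ^ i * (((c : ℝ) - (i : ℝ)) / (c : ℝ)) ^ (v - i)
            * probSingleton (v - i) (c - i) 0)
    ∧ (∀ i, v < i → probSingleton v c i = 0) := by
  have pow_c_ne_zero : (c : ℝ) ^ v ≠ 0 := by positivity
  refine ⟨fun i hi => ?_, fun i hi => ?_⟩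
  · obtain ⟨hic, hiv⟩ := le_min_iff.1 hi
    have pow_split : (c : ℝ) ^ v = (c : ℝ) ^ i * (c : ℝ) ^ (v - i) := by
      rw [← pow_add, Nat.add_sub_of_le hiv]
    apply mul_left_cancel₀ pow_c_ne_zero
    rw [pow_mul_probSingleton, card_filter_singletonFiberCount_eq]
    push_cast
    rw [← pow_mul_probSingleton, Nat.cast_sub hic, pow_split, div_pow, div_pow, one_pow]
    field_simp
  · refine (mul_eq_zero_iff_left pow_c_ne_zero).1 ?_
    rw [pow_mul_probSingleton, card_filter_singletonFiberCount_eq, Nat.choose_eq_zero_of_lt hi]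
    simp
end

section
/- Let N ≥ 2 and T ≥ 1 be integers, and for real α > 1/N define F(α) = (N−1)·(T+α)/(2·(N·α−1)) + (N·α−N)·(α−1)/(2·(N·α−1)). Then F attains its minimum on (1/N, ∞) uniquely at α* = (1 + √(N·(N−1)·(T+1)))/N, i.e., F(α) ≥ F(α*) for all α > 1/N with equality iff α = α*, and equivalently the minimum is characterized by the equation (N·α−1)² = N·(N−1)·(T+1). (The theoretically optimal RRI.) -/
/-!
If `(Nβ − 1)² = N(N − 1)(T + 1)`, then clearing denominators and completing the square turns the
excess `F(α) − F(β)` into `N(α − β)² / (2(Nα − 1))`. On `α > 1/N` this is nonnegative and vanishes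
only at `α = β`, and the positive root of the equation is `Nβ − 1 = √(N(N − 1)(T + 1))`.
-/

/-- The static-flow average AoI `A(N, α, c, T)` at `c = Nα`, as a function of the RRI `α`, with all
parameters real. -/
noncomputable def staticFlowAoI (N T α : ℝ) : ℝ :=
  (N - 1) * (T + α) / (2 * (N * α - 1)) + (N * α - N) * (α - 1) / (2 * (N * α - 1))

/-- The theoretically optimal RRI `α*`. -/
noncomputable def optimalRRI (N T : ℝ) : ℝ :=
  (1 + √(N * (N - 1) * (T + 1))) / N

variable {N T α β : ℝ}

theorem staticFlowAoI_sub_of_sq_eq (hα : N * α - 1 ≠ 0) (hβ : N * β - 1 ≠ 0)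
    (h : (N * β - 1) ^ 2 = N * (N - 1) * (T + 1)) :
    staticFlowAoI N T α - staticFlowAoI N T β = N * (α - β) ^ 2 / (2 * (N * α - 1)) := by
  unfold staticFlowAoI
  field_simp
  linear_combination (α - β) * h

theorem staticFlowAoI_le_of_sq_eq (hN : 0 ≤ N) (hα : 0 < N * α - 1) (hβ : N * β - 1 ≠ 0)
    (h : (N * β - 1) ^ 2 = N * (N - 1) * (T + 1)) :
    staticFlowAoI N T β ≤ staticFlowAoI N T α := by
  rw [← sub_nonneg, staticFlowAoI_sub_of_sq_eq hα.ne' hβ h]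
  positivity

theorem staticFlowAoI_eq_iff_of_sq_eq (hα : N * α - 1 ≠ 0) (hβ : N * β - 1 ≠ 0)
    (h : (N * β - 1) ^ 2 = N * (N - 1) * (T + 1)) :
    staticFlowAoI N T α = staticFlowAoI N T β ↔ α = β := by
  have hN : N ≠ 0 := by
    rintro rfl
    norm_num at h
  rw [← sub_eq_zero, staticFlowAoI_sub_of_sq_eq hα hβ h]
  simp [hN, hα, sub_eq_zero]

theorem eq_optimalRRI_iff (hN : N ≠ 0) :
    α = optimalRRI N T ↔ N * α - 1 = √(N * (N - 1) * (T + 1)) := by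
  rw [optimalRRI, eq_div_iff hN, mul_comm, sub_eq_iff_eq_add']

theorem sq_eq_iff_eq_optimalRRI (hN : N ≠ 0) (hα : 0 < N * α - 1) :
    (N * α - 1) ^ 2 = N * (N - 1) * (T + 1) ↔ α = optimalRRI N T := by
  rw [eq_optimalRRI_iff hN, eq_comm (b := √_), Real.sqrt_eq_iff_mul_self_eq_of_pos hα, sq]

theorem mul_optimalRRI_sub_one_pos (hN : 0 < N) (hNT : 0 < (N - 1) * (T + 1)) :
    0 < N * optimalRRI N T - 1 := by
  rw [(eq_optimalRRI_iff hN.ne').1 rfl, Real.sqrt_pos, mul_assoc]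
  exact mul_pos hN hNT

theorem caps_optimal_rri_general (hN : 0 < N) (hNT : 0 < (N - 1) * (T + 1)) :
    1 / N < optimalRRI N T
      ∧ (∀ α : ℝ, 1 / N < α → staticFlowAoI N T (optimalRRI N T) ≤ staticFlowAoI N T α)
      ∧ (∀ α : ℝ, 1 / N < α →
          (staticFlowAoI N T α = staticFlowAoI N T (optimalRRI N T) ↔ α = optimalRRI N T))
      ∧ (∀ α : ℝ, 1 / N < α →
          ((N * α - 1) ^ 2 = N * (N - 1) * (T + 1) ↔ α = optimalRRI N T)) := by
  have domain_iff (α : ℝ) : 1 / N < α ↔ 0 < N * α - 1 := by rw [div_lt_iff₀' hN, sub_pos]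
  have hpos : 0 < N * optimalRRI N T - 1 := mul_optimalRRI_sub_one_pos hN hNT
  have hsq : (N * optimalRRI N T - 1) ^ 2 = N * (N - 1) * (T + 1) :=
    (sq_eq_iff_eq_optimalRRI hN.ne' hpos).2 rfl
  simp only [domain_iff]
  exact ⟨hpos,
    fun _ hα ↦ staticFlowAoI_le_of_sq_eq hN.le hα hpos.ne' hsq,
    fun _ hα ↦ staticFlowAoI_eq_iff_of_sq_eq hα.ne' hpos.ne' hsq,
    fun _ hα ↦ sq_eq_iff_eq_optimalRRI hN.ne' hα⟩

/-- The theoretically optimal RRI: the static-flow average AoI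
`F(α) = (N−1)(T+α)/(2(Nα−1)) + (Nα−N)(α−1)/(2(Nα−1))` attains its minimum on
`(1/N, ∞)` uniquely at `α* = (1 + √(N(N−1)(T+1)))/N`, and on `(1/N, ∞)` the minimum
is characterized by the equation `(Nα−1)² = N(N−1)(T+1)`. -/
theorem caps_optimal_rri (N T : ℤ) (hN : 2 ≤ N) (hT : 1 ≤ T) :
    let F : ℝ → ℝ := fun α =>
      ((N : ℝ) - 1) * ((T : ℝ) + α) / (2 * ((N : ℝ) * α - 1))
        + ((N : ℝ) * α - (N : ℝ)) * (α - 1) / (2 * ((N : ℝ) * α - 1))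
    let αstar : ℝ := (1 + Real.sqrt ((N : ℝ) * ((N : ℝ) - 1) * ((T : ℝ) + 1))) / (N : ℝ)
    (1 / (N : ℝ) < αstar)
      ∧ (∀ α : ℝ, 1 / (N : ℝ) < α → F αstar ≤ F α)
      ∧ (∀ α : ℝ, 1 / (N : ℝ) < α → (F α = F αstar ↔ α = αstar))
      ∧ (∀ α : ℝ, 1 / (N : ℝ) < α →
          (((N : ℝ) * α - 1) ^ 2 = (N : ℝ) * ((N : ℝ) - 1) * ((T : ℝ) + 1) ↔ α = αstar)) := by
  have hN' : (1 : ℝ) < N := by exact_mod_cast hN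
  have hT' : (0 : ℝ) < T + 1 := by exact_mod_cast (by lia : 0 < T + 1)
  exact caps_optimal_rri_general (zero_lt_one.trans hN') (mul_pos (sub_pos.2 hN') hT')
end
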